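/- arXiv:1711.01827 — 3 statements merged into one kernel-verified Lean document; each statement's English description precedes it below -/
import Mathlib

section
/- Let r ≥ 1 and let k_1, …, k_r be integers with k_i ≥ 2 for every i. Then Σ_{σ ∈ S_r} ζ*(k_{σ(1)}, …, k_{σ(r)}) = Σ_{Π ∈ P(r)} c̄(Π) · ∏_{P ∈ Π} ζ(Σ_{p ∈ P} k_p), where S_r is the symmetric group on {1,…,r}. (This is the shuffle symmetric-sum theorem for multiple zeta-star values in the convergent case, where regularized values coincide with the actual values and the characteristic factors are all 1.) -/
open Finset

open scoped Classical

/-- The Riemann zeta value `ζ(m) = Σ_{n ≥ 1} 1/n^m`. -/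
noncomputable def zetaVal (m : ℕ) : ℝ := ∑' n : ℕ, 1 / ((n : ℝ) + 1) ^ m

/-- The multiple zeta-star value
`ζ*(k_1, …, k_r) = Σ_{0 < m_1 ≤ m_2 ≤ ⋯ ≤ m_r} 1/(m_1^{k_1} ⋯ m_r^{k_r})`,
where positive integers `m_i` are parametrized as `m i + 1` for `m : Fin r → ℕ` monotone. -/
noncomputable def mzsv {r : ℕ} (k : Fin r → ℕ) : ℝ :=
  ∑' m : { f : Fin r → ℕ // Monotone f }, ∏ i : Fin r, 1 / ((m.1 i : ℝ) + 1) ^ k i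

/-- The set of partitions of a finite set `S`: sets of nonempty pairwise disjoint
subsets (blocks) of `S` whose union is `S`. -/
noncomputable def partitionsOf {α : Type*} [DecidableEq α] (S : Finset α) :
    Finset (Finset (Finset α)) :=
  S.powerset.powerset.filter (fun π =>
    (∀ P ∈ π, P.Nonempty) ∧
    (∀ P ∈ π, ∀ Q ∈ π, P ≠ Q → Disjoint P Q) ∧
    π.biUnion id = S)

/-- `c̄(Π) = ∏_{P ∈ Π} (|P| - 1)!`. -/
def cbar {α : Type*} (π : Finset (Finset α)) : ℕ :=
  ∏ P ∈ π, (P.card - 1).factorial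

theorem mem_pO {α : Type*} [DecidableEq α] {S : Finset α} {π : Finset (Finset α)} :
    π ∈ partitionsOf S ↔ (∀ P ∈ π, P.Nonempty) ∧
    (∀ P ∈ π, ∀ Q ∈ π, ∀ a, a ∈ P → a ∈ Q → P = Q) ∧ (∀ a, a ∈ S ↔ ∃ P ∈ π, a ∈ P) := by
  unfold partitionsOf
  simp only [mem_filter, mem_powerset]
  constructor
  · rintro ⟨_, h1, h2, h3⟩
    refine ⟨h1, ?_, ?_⟩
    · intro P hP Q hQ a ha hb
      by_contra hne
      exact Finset.disjoint_left.1 (h2 P hP Q hQ hne) ha hb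
    · intro a
      rw [← h3]; simp
  · rintro ⟨h1, h2, h3⟩
    refine ⟨?_, h1, ?_, ?_⟩
    · intro P hP
      rw [mem_powerset]
      intro a ha
      exact (h3 a).2 ⟨P, hP, ha⟩
    · intro P hP Q hQ hne
      rw [Finset.disjoint_left]
      intro a ha hb
      exact hne (h2 P hP Q hQ a ha hb)
    · ext a
      rw [h3]; simp

theorem sum_pO_insert {α : Type*} [DecidableEq α] (S : Finset α) (x : α) (hx : x ∉ S)
    (g : Finset (Finset α) → ℕ) :
    ∑ π ∈ partitionsOf (insert x S), g π =
      ∑ π ∈ partitionsOf S, (g (insert {x} π) + ∑ P ∈ π, g (insert (insert x P) (π.erase P))) := by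
  have hxP : ∀ π ∈ partitionsOf S, ∀ P ∈ π, x ∉ P := by
    intro π hπ P hP hxP
    exact hx (((mem_pO.1 hπ).2.2 x).2 ⟨P, hP, hxP⟩)
  rw [sum_add_distrib, ← sum_filter_add_sum_filter_not (partitionsOf (insert x S)) (fun π => {x} ∈ π)]
  congr 1
  · symm
    apply sum_nbij' (fun π => insert {x} π) (fun π => π.erase {x})
    · intro π hπ
      have := hxP π hπ
      rw [mem_pO] at hπ
      obtain ⟨h1, h2, h3⟩ := hπ
      rw [mem_filter, mem_pO]
      refine ⟨⟨?_, ?_, ?_⟩, by simp⟩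
      · intro P hP
        grind
      · intro P hP Q hQ a ha hb
        simp only [mem_insert] at hP hQ
        rcases hP with rfl | hP <;> rcases hQ with rfl | hQ
        · rfl
        · simp at ha; subst ha; exact absurd hb (this Q hQ)
        · simp at hb; subst hb; exact absurd ha (this P hP)
        · exact h2 P hP Q hQ a ha hb
      · intro a
        rw [mem_insert, h3]
        simp
    · intro π hπ
      rw [mem_filter, mem_pO] at hπ
      obtain ⟨⟨h1, h2, h3⟩, h4⟩ := hπ
      rw [mem_pO]
      refine ⟨?_, ?_, ?_⟩
      · intro P hP
        exact h1 P (mem_of_mem_erase hP)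
      · intro P hP Q hQ
        exact h2 P (mem_of_mem_erase hP) Q (mem_of_mem_erase hQ)
      · intro a
        constructor
        · intro ha
          obtain ⟨P, hP, haP⟩ := (h3 a).1 (mem_insert_of_mem ha)
          refine ⟨P, mem_erase.2 ⟨?_, hP⟩, haP⟩
          rintro rfl
          simp at haP; subst haP; exact hx ha
        · rintro ⟨P, hP, haP⟩
          obtain ⟨hne, hP2⟩ := mem_erase.1 hP
          have := (h3 a).2 ⟨P, hP2, haP⟩
          rcases mem_insert.1 this with h | h
          · exact absurd (h2 P hP2 _ h4 a haP (by simp [h])) hne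
          · exact h
    · intro π hπ
      have : {x} ∉ π := fun h => hxP π hπ _ h (by simp)
      exact erase_insert this
    · intro π hπ
      exact insert_erase (mem_filter.1 hπ).2
    · intros; rfl
  · rw [sum_sigma']
    symm
    refine sum_bij (fun p _ => insert (insert x p.2) (p.1.erase p.2)) ?_ ?_ ?_ ?_
    · rintro ⟨π, P⟩ hp
      obtain ⟨hπ, hP⟩ := mem_sigma.1 hp
      dsimp only at hπ hP ⊢
      have := hxP π hπ
      rw [mem_pO] at hπ
      obtain ⟨h1, h2, h3⟩ := hπ
      rw [mem_filter, mem_pO]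
      refine ⟨⟨?_, ?_, ?_⟩, ?_⟩
      · intro Q hQ
        grind
      · intro Q hQ R hR a ha hb
        simp only [mem_insert, mem_erase] at hQ hR
        grind
      · intro a
        rw [mem_insert, h3]
        constructor
        · rintro (rfl | ⟨Q, hQ, ha⟩)
          · exact ⟨insert a P, by simp, by simp⟩
          · by_cases h : Q = P
            · exact ⟨insert x P, by simp, by subst h; simp [ha]⟩
            · exact ⟨Q, by simp [h, hQ], ha⟩
        · rintro ⟨Q, hQ, ha⟩
          simp only [mem_insert, mem_erase] at hQ
          grind
      · intro h
        simp only [mem_insert, mem_erase] at h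
        rcases h with h | h
        · obtain ⟨y, hy⟩ := h1 P hP
          have : y ∈ ({x} : Finset α) := by rw [h]; simp [hy]
          simp at this; subst this; exact absurd hy (this P hP)
        · exact this _ h.2 (by simp)
    · rintro ⟨π, P⟩ hp ⟨π', P'⟩ hp' h
      obtain ⟨hπ, hP⟩ := mem_sigma.1 hp
      obtain ⟨hπ', hP'⟩ := mem_sigma.1 hp'
      dsimp only at hπ hP hπ' hP' h
      have h1 := hxP π hπ
      have h2 := hxP π' hπ'
      have e : insert x P = insert x P' := by
        have : insert x P ∈ insert (insert x P') (π'.erase P') := by rw [← h]; simp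
        simp only [mem_insert, mem_erase] at this
        rcases this with h | h
        · exact h
        · exact absurd (by simp) (h2 _ h.2)
      have e2 : P = P' := by
        rw [← erase_insert (h1 P hP), e, erase_insert (h2 P' hP')]
      subst e2
      have e3 : π.erase P = π'.erase P := by
        rw [← erase_insert (a := insert x P) (s := π.erase P), h, erase_insert]
        · intro hh; exact h2 _ (mem_of_mem_erase hh) (by simp)
        · intro hh; exact h1 _ (mem_of_mem_erase hh) (by simp)
      have e4 : π = π' := by
        rw [← insert_erase hP, e3, insert_erase hP']
      subst e4
      rfl
    · intro π hπ
      rw [mem_filter, mem_pO] at hπ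
      obtain ⟨⟨h1, h2, h3⟩, h4⟩ := hπ
      obtain ⟨B, hB, hxB⟩ := (h3 x).1 (by simp)
      have hBne : (B.erase x).Nonempty := by
        rw [nonempty_iff_ne_empty]
        intro h
        apply h4
        rw [← insert_erase hxB, h] at hB
        simpa using hB
      have hnot : B.erase x ∉ π.erase B := by
        intro hh
        obtain ⟨y, hy⟩ := hBne
        have := h2 _ (mem_of_mem_erase hh) B hB y hy (mem_of_mem_erase hy)
        exact (mem_erase.1 hh).1 this
      refine ⟨⟨insert (B.erase x) (π.erase B), B.erase x⟩, ?_, ?_⟩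
      · rw [mem_sigma]
        refine ⟨?_, by simp⟩
        dsimp only
        rw [mem_pO]
        refine ⟨?_, ?_, ?_⟩
        · intro P hP
          simp only [mem_insert, mem_erase] at hP
          rcases hP with rfl | hP
          · exact hBne
          · exact h1 _ hP.2
        · intro Q hQ R hR a ha hb
          simp only [mem_insert, mem_erase] at hQ hR
          grind
        · intro a
          have h3a := h3 a
          rw [mem_insert] at h3a
          constructor
          · intro ha
            obtain ⟨P, hP, haP⟩ := h3a.1 (Or.inr ha)
            have hax : a ≠ x := fun h => hx (h ▸ ha)
            by_cases h : P = B
            · exact ⟨B.erase x, by simp, by subst h; simp [hax, haP]⟩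
            · exact ⟨P, by simp [h, hP], haP⟩
          · rintro ⟨P, hP, haP⟩
            simp only [mem_insert, mem_erase] at hP
            grind
      · dsimp only
        rw [erase_insert hnot, insert_erase hxB, insert_erase hB]
    · intros; rfl

theorem pO_empty {α : Type*} [DecidableEq α] : partitionsOf (∅ : Finset α) = {∅} := by
  ext π
  rw [mem_pO, mem_singleton]
  constructor
  · rintro ⟨h1, h2, h3⟩
    rw [eq_empty_iff_forall_notMem]
    intro P hP
    obtain ⟨y, hy⟩ := h1 P hP
    exact absurd ((h3 y).2 ⟨P, hP, hy⟩) (by simp)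
  · rintro rfl; simp

/-- `f` is constant on every block. -/
def CB {α : Type*} (f : α → ℕ) (π : Finset (Finset α)) : Prop :=
  ∀ P ∈ π, ∀ a ∈ P, ∀ b ∈ P, f a = f b

theorem count_pO {α : Type*} [DecidableEq α] (f : α → ℕ) (N : ℕ) (S : Finset α) :
    (∀ a ∈ S, f a < N) →
    ∑ π ∈ partitionsOf S, (if CB f π then cbar π else 0) =
      ∏ n ∈ range N, (#{a ∈ S | f a = n}).factorial := by
  induction S using Finset.induction_on with
  | empty => intro _; rw [pO_empty]; simp [CB, cbar]
  | insert x S hx ih =>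
    intro hN
    rw [sum_pO_insert S x hx]
    have key : ∀ π ∈ partitionsOf S,
        ((if CB f (insert {x} π) then cbar (insert {x} π) else 0) +
          ∑ P ∈ π, (if CB f (insert (insert x P) (π.erase P)) then
            cbar (insert (insert x P) (π.erase P)) else 0)) =
        (if CB f π then cbar π else 0) * (1 + #{a ∈ S | f a = f x}) := by
      intro π hπ
      have hxP : ∀ P ∈ π, x ∉ P := fun P hP h => hx (((mem_pO.1 hπ).2.2 x).2 ⟨P, hP, h⟩)
      obtain ⟨h1, h2, h3⟩ := mem_pO.1 hπ
      have hx1 : {x} ∉ π := fun h => hxP _ h (by simp)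
      rw [mul_add]
      congr 1
      · have : CB f (insert {x} π) ↔ CB f π := by simp [CB]
        simp [this, cbar, prod_insert hx1]
      · by_cases hc : CB f π
        · rw [if_pos hc]
          have e1 : ∀ P ∈ π, (if CB f (insert (insert x P) (π.erase P)) then
            cbar (insert (insert x P) (π.erase P)) else 0) = cbar π * #{a ∈ P | f a = f x} := by
            intro P hP
            have hne := h1 P hP
            by_cases hP2 : ∀ a ∈ P, f a = f x
            · rw [if_pos, filter_true_of_mem hP2]
              · unfold cbar
                rw [prod_insert, card_insert_of_notMem (hxP P hP), ← mul_prod_erase π _ hP]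
                · have := hne.card_pos
                  obtain ⟨c, hc⟩ : ∃ c, #P = c + 1 := ⟨#P - 1, by omega⟩
                  rw [hc]
                  simp [Nat.factorial_succ]
                  ring
                · intro hh; exact hxP _ (mem_of_mem_erase hh) (by simp)
              · intro Q hQ a ha b hb
                simp only [mem_insert, mem_erase] at hQ
                rcases hQ with rfl | hQ
                · rcases mem_insert.1 ha with rfl | ha <;> rcases mem_insert.1 hb with rfl | hb <;>
                    simp_all
                · exact hc Q hQ.2 a ha b hb
            · push Not at hP2
              obtain ⟨a, ha, hax⟩ := hP2
              rw [if_neg, filter_false_of_mem]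
              · simp
              · intro b hb hbx
                exact hax ((hc P hP a ha b hb).trans hbx)
              · intro h
                exact hax (h (insert x P) (by simp) a (by simp [ha]) x (by simp))
          rw [sum_congr rfl e1, ← mul_sum]
          congr 1
          rw [← card_biUnion]
          · congr 1
            ext a
            simp only [mem_biUnion, mem_filter, h3]
            tauto
          · intro P hP Q hQ hne
            rw [Function.onFun, Finset.disjoint_left]
            intro a ha hb
            exact hne (h2 P hP Q hQ a (mem_filter.1 ha).1 (mem_filter.1 hb).1)
        · rw [if_neg hc, zero_mul]
          apply sum_eq_zero
          intro P hP
          rw [if_neg]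
          intro h
          apply hc
          intro Q hQ a ha b hb
          by_cases hQP : Q = P
          · subst hQP
            exact h (insert x Q) (by simp) a (by simp [ha]) b (by simp [hb])
          · exact h Q (by simp [hQP, hQ]) a ha b hb
    rw [sum_congr rfl key, ← sum_mul, ih (fun a ha => hN a (mem_insert_of_mem ha))]
    have hfx : f x ∈ range N := mem_range.2 (hN x (by simp))
    rw [← mul_prod_erase _ _ hfx, ← mul_prod_erase (range N) (fun n => (#{a ∈ insert x S | f a = n}).factorial) hfx]
    have e2 : ∀ n ∈ (range N).erase (f x), (#{a ∈ insert x S | f a = n}).factorial = (#{a ∈ S | f a = n}).factorial := by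
      intro n hn
      rw [filter_insert, if_neg (mem_erase.1 hn).1.symm]
    rw [prod_congr rfl e2]
    have e3 : #{a ∈ insert x S | f a = f x} = #{a ∈ S | f a = f x} + 1 := by
      rw [filter_insert, if_pos rfl, card_insert_of_notMem (by simp [hx])]
    rw [e3, Nat.factorial_succ]
    ring

theorem count_mono {r : ℕ} (f : Fin r → ℕ) (N : ℕ) (hN : ∀ a, f a < N) :
    #{σ : Equiv.Perm (Fin r) | Monotone (f ∘ σ)} =
      ∏ n ∈ range N, (#{a ∈ (univ : Finset (Fin r)) | f a = n}).factorial := by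
  have h1 : #{σ : Equiv.Perm (Fin r) | Monotone (f ∘ σ)} =
      #{σ : Equiv.Perm (Fin r) | f ∘ σ = f} := by
    apply card_nbij' (fun σ => σ * (Tuple.sort f)⁻¹) (fun τ => τ * Tuple.sort f)
    · intro σ hσ
      simp only [coe_filter, mem_univ, true_and, Set.mem_setOf_eq] at hσ ⊢
      rw [← Tuple.comp_sort_eq_comp_iff_monotone] at hσ
      ext i
      have := congrFun hσ ((Tuple.sort f)⁻¹ i)
      simpa using this
    · intro τ hτ
      simp only [coe_filter, mem_univ, true_and, Set.mem_setOf_eq] at hτ ⊢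
      rw [← Tuple.comp_sort_eq_comp_iff_monotone]
      ext i
      exact congrFun hτ (Tuple.sort f i)
    · intro σ _; simp
    · intro σ _; simp
  rw [h1, ← Fintype.card_subtype, DomMulAct.stabilizer_card' f]
  simp only [Fintype.card_subtype]
  apply prod_subset
  · intro n hn
    obtain ⟨a, _, rfl⟩ := mem_image.1 hn
    exact mem_range.2 (hN a)
  · intro n _ hn
    rw [filter_false_of_mem]
    · simp
    · intro a _ ha
      exact hn (mem_image.2 ⟨a, mem_univ _, ha⟩)

theorem prod_blocks {r : ℕ} (N : ℕ) (F : Fin r → ℕ → ℝ) (π : Finset (Finset (Fin r)))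
    (hπ : π ∈ partitionsOf (univ : Finset (Fin r))) :
    ∏ P ∈ π, ∑ n ∈ range N, ∏ p ∈ P, F p n =
      ∑ f ∈ Fintype.piFinset (fun _ : Fin r => range N),
        if CB f π then ∏ p, F p (f p) else 0 := by
  obtain ⟨h1, h2, h3⟩ := mem_pO.1 hπ
  have h4 : ∀ a, ∃ P : π, a ∈ P.1 := fun a => by
    obtain ⟨P, hP, h⟩ := (h3 a).1 (mem_univ a)
    exact ⟨⟨P, hP⟩, h⟩
  choose B hB using h4
  have hBu : ∀ (P : π) (a), a ∈ P.1 → B a = P := fun P a ha =>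
    Subtype.ext (h2 _ (B a).2 _ P.2 a (hB a) ha)
  have h5 : ∀ P : π, ∃ a, a ∈ P.1 := fun P => h1 P.1 P.2
  choose e he using h5
  rw [← prod_coe_sort, prod_univ_sum, ← sum_filter]
  apply sum_nbij' (fun g a => g (B a)) (fun f P => f (e P))
  · intro g hg
    simp only [mem_filter, Fintype.mem_piFinset] at hg ⊢
    refine ⟨fun a => hg _, ?_⟩
    intro P hP a ha b hb
    simp only
    rw [hBu ⟨P, hP⟩ a ha, hBu ⟨P, hP⟩ b hb]
  · intro f hf
    simp only [mem_filter, Fintype.mem_piFinset] at hf ⊢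
    exact fun P => hf.1 _
  · intro g _
    ext P
    simp only
    rw [hBu P _ (he P)]
  · intro f hf
    simp only [mem_filter, Fintype.mem_piFinset] at hf
    ext a
    exact hf.2 _ (B a).2 _ (he _) _ (hB a)
  · intro g _
    have : (univ : Finset (Fin r)) = (univ : Finset π).biUnion (fun P => P.1) := by
      ext a; simp only [mem_univ, mem_biUnion, true_and, true_iff]; exact ⟨B a, hB a⟩
    rw [this, prod_biUnion]
    · apply prod_congr rfl
      intro P _
      apply prod_congr rfl
      intro p hp
      simp only
      rw [hBu P p hp]
    · intro P _ Q _ hne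
      rw [Function.onFun, Finset.disjoint_left]
      intro a ha hb
      exact hne (Subtype.ext (h2 _ P.2 _ Q.2 a ha hb))

theorem finite_id {r : ℕ} (N : ℕ) (F : Fin r → ℕ → ℝ) :
    ∑ σ : Equiv.Perm (Fin r), ∑ m ∈ Fintype.piFinset (fun _ : Fin r => range N),
      (if Monotone m then ∏ i, F (σ i) (m i) else 0) =
    ∑ π ∈ partitionsOf (univ : Finset (Fin r)),
      (cbar π : ℝ) * ∏ P ∈ π, ∑ n ∈ range N, ∏ p ∈ P, F p n := by
  have hL : ∀ σ : Equiv.Perm (Fin r), ∑ m ∈ Fintype.piFinset (fun _ : Fin r => range N),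
      (if Monotone m then ∏ i, F (σ i) (m i) else 0) =
      ∑ f ∈ Fintype.piFinset (fun _ : Fin r => range N),
        if Monotone (f ∘ σ) then ∏ i, F i (f i) else 0 := by
    intro σ
    apply sum_nbij' (fun m => m ∘ σ.symm) (fun f => f ∘ σ)
    · intro m hm
      simp only [Fintype.mem_piFinset] at hm ⊢
      exact fun a => hm _
    · intro m hm
      simp only [Fintype.mem_piFinset] at hm ⊢
      exact fun a => hm _
    · intro m _; ext i; simp
    · intro m _; ext i; simp
    · intro m _
      have : (m ∘ σ.symm) ∘ σ = m := by ext i; simp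
      rw [this, ← Equiv.prod_comp σ (fun i => F i ((m ∘ σ.symm) i))]
      simp
  have hR : ∀ π ∈ partitionsOf (univ : Finset (Fin r)),
      (cbar π : ℝ) * ∏ P ∈ π, ∑ n ∈ range N, ∏ p ∈ P, F p n =
      ∑ f ∈ Fintype.piFinset (fun _ : Fin r => range N),
        (cbar π : ℝ) * (if CB f π then ∏ p, F p (f p) else 0) := by
    intro π hπ
    rw [prod_blocks N F π hπ, mul_sum]
  rw [sum_congr rfl (fun σ _ => hL σ), sum_comm, sum_congr rfl hR,
    sum_comm (s := partitionsOf (univ : Finset (Fin r)))]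
  apply sum_congr rfl
  intro f hf
  have hfN : ∀ a, f a < N := fun a => mem_range.1 (Fintype.mem_piFinset.1 hf a)
  have key : #{σ : Equiv.Perm (Fin r) | Monotone (f ∘ σ)} =
      ∑ π ∈ partitionsOf (univ : Finset (Fin r)), (if CB f π then cbar π else 0) := by
    rw [count_mono f N hfN, count_pO f N univ (fun a _ => hfN a)]
  have key2 := congrArg (fun n : ℕ => (n : ℝ) * ∏ i, F i (f i)) key
  rw [← sum_filter, sum_const, nsmul_eq_mul, key2, Nat.cast_sum, sum_mul]
  apply sum_congr rfl
  intro π _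
  split_ifs <;> simp

theorem box_tendsto (r : ℕ) : Filter.Tendsto
    (fun N : ℕ => Fintype.piFinset (fun _ : Fin r => range N)) Filter.atTop Filter.atTop := by
  apply Filter.tendsto_atTop_finset_of_monotone
  · intro a b hab
    exact Fintype.piFinset_subset _ _ (fun _ => range_subset_range.2 hab)
  · intro f
    refine ⟨univ.sup f + 1, ?_⟩
    simp only [Fintype.mem_piFinset, mem_range]
    intro a
    exact Nat.lt_succ_of_le (le_sup (mem_univ a))

theorem zeta_summable (m : ℕ) (hm : 2 ≤ m) : Summable (fun n : ℕ => 1 / ((n : ℝ) + 1) ^ m) := by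
  have := (summable_nat_add_iff 1).2 (Real.summable_one_div_nat_pow.2 (show 1 < m by omega))
  simpa using this

theorem pi_summable {r : ℕ} (k : Fin r → ℕ) (hk : ∀ i, 2 ≤ k i) :
    Summable (fun f : Fin r → ℕ => ∏ i, 1 / ((f i : ℝ) + 1) ^ k i) := by
  apply summable_of_sum_le (c := ∏ i, ∑' n : ℕ, 1 / ((n : ℝ) + 1) ^ k i)
  · intro f; positivity
  · intro u
    obtain ⟨N, hN⟩ := ((Filter.tendsto_atTop.1 (box_tendsto r)) u).exists
    refine (sum_le_sum_of_subset_of_nonneg hN (fun f _ _ => by positivity)).trans ?_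
    rw [← prod_univ_sum (fun _ => range N) (fun i n => 1 / ((n : ℝ) + 1) ^ k i)]
    apply prod_le_prod
    · intro i _; positivity
    · intro i _
      exact (zeta_summable _ (hk i)).sum_le_tsum _ (fun n _ => by positivity)

theorem mzsv_tendsto {r : ℕ} (k : Fin r → ℕ) (hk : ∀ i, 2 ≤ k i) :
    Filter.Tendsto (fun N : ℕ => ∑ m ∈ Fintype.piFinset (fun _ : Fin r => range N),
      (if Monotone m then ∏ i, 1 / ((m i : ℝ) + 1) ^ k i else 0)) Filter.atTop (nhds (mzsv k)) := by
  have h := ((pi_summable k hk).indicator {f | Monotone f}).hasSum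
  have e : mzsv k = ∑' f, Set.indicator {f : Fin r → ℕ | Monotone f}
      (fun f : Fin r → ℕ => ∏ i, 1 / ((f i : ℝ) + 1) ^ k i) f :=
    tsum_subtype {f : Fin r → ℕ | Monotone f} (fun f : Fin r → ℕ => ∏ i, 1 / ((f i : ℝ) + 1) ^ k i)
  rw [← e] at h
  refine (Filter.Tendsto.comp h (box_tendsto r)).congr ?_
  intro N
  apply sum_congr rfl
  intro m _
  simp [Set.indicator_apply]

/-- Shuffle symmetric-sum theorem for multiple zeta-star values in the convergent case:
for `r ≥ 1` and `k_i ≥ 2` for all `i`,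
`Σ_{σ ∈ S_r} ζ*(k_{σ(1)}, …, k_{σ(r)}) = Σ_{Π ∈ P(r)} c̄(Π) ∏_{P ∈ Π} ζ(Σ_{p ∈ P} k_p)`. -/
theorem symmetric_sum_mzsv_convergent {r : ℕ} (hr : 1 ≤ r) (k : Fin r → ℕ)
    (hk : ∀ i, 2 ≤ k i) :
    ∑ σ : Equiv.Perm (Fin r), mzsv (fun i => k (σ i)) =
      ∑ π ∈ partitionsOf (Finset.univ : Finset (Fin r)),
        (cbar π : ℝ) * ∏ P ∈ π, zetaVal (∑ p ∈ P, k p) := by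
  have hL := tendsto_finset_sum (univ : Finset (Equiv.Perm (Fin r)))
    (fun σ _ => mzsv_tendsto (fun i => k (σ i)) (fun i => hk _))
  have hR : Filter.Tendsto (fun N : ℕ => ∑ π ∈ partitionsOf (univ : Finset (Fin r)),
      (cbar π : ℝ) * ∏ P ∈ π, ∑ n ∈ range N, ∏ p ∈ P, 1 / ((n : ℝ) + 1) ^ k p) Filter.atTop
      (nhds (∑ π ∈ partitionsOf (Finset.univ : Finset (Fin r)),
        (cbar π : ℝ) * ∏ P ∈ π, zetaVal (∑ p ∈ P, k p))) := by
    apply tendsto_finset_sum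
    intro π hπ
    apply Filter.Tendsto.const_mul
    apply tendsto_finset_prod
    intro P hP
    obtain ⟨a, ha⟩ := (mem_pO.1 hπ).1 P hP
    have h2 : 2 ≤ ∑ p ∈ P, k p :=
      (hk a).trans (single_le_sum (f := k) (fun _ _ => Nat.zero_le _) ha)
    refine (zeta_summable _ h2).hasSum.tendsto_sum_nat.congr ?_
    intro N
    apply sum_congr rfl
    intro n _
    simp [prod_pow_eq_pow_sum]
  refine tendsto_nhds_unique hL (hR.congr ?_)
  intro N
  exact (finite_id N (fun i n => 1 / ((n : ℝ) + 1) ^ k i)).symm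
end

section
/- Let r ≥ 1 and let B be a proper subset of {1,…,r}. Then for every partition Π ∈ P(r) there exists a unique triple (A, Ξ, Δ) with A ⊆ B, Ξ a partition of A, and Δ ∈ P_B({1,…,r}∖A), such that the set of blocks of Π is the disjoint union of the set of blocks of Ξ and the set of blocks of Δ; conversely, for every such triple (A, Ξ, Δ), the union of the blocks of Ξ and of Δ forms a partition of {1,…,r}. (Here A may be empty, in which case Ξ is the empty set of blocks.) -/
open Finset

open scoped Classical

/-- `P_B(C)`: the set of partitions of `C` none of whose blocks is contained in `B`. -/
noncomputable def partitionsAvoiding {α : Type*} [DecidableEq α] (B C : Finset α) :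
    Finset (Finset (Finset α)) :=
  (partitionsOf C).filter (fun Δ => ∀ Q ∈ Δ, ¬ Q ⊆ B)

theorem mem_partitionsOf_iff' {α : Type*} [DecidableEq α] (S : Finset α) (π : Finset (Finset α)) :
    π ∈ partitionsOf S ↔ (∀ P ∈ π, P.Nonempty) ∧
      (∀ P ∈ π, ∀ Q ∈ π, ∀ x, x ∈ P → x ∈ Q → P = Q) ∧ (∀ x, x ∈ S ↔ ∃ P ∈ π, x ∈ P) := by
  unfold partitionsOf
  rw [Finset.mem_filter]
  constructor
  · rintro ⟨-, h1, h2, h3⟩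
    refine ⟨h1, ?_, ?_⟩
    · intro P hP Q hQ x hx hx'
      by_contra hne
      exact (Finset.disjoint_left.mp (h2 P hP Q hQ hne)) hx hx'
    · intro x
      rw [← h3]
      simp
  · rintro ⟨h1, h2, h3⟩
    refine ⟨?_, h1, ?_, ?_⟩
    · simp only [Finset.mem_powerset]
      intro P hP
      simp only [Finset.mem_powerset]
      intro x hx
      exact (h3 x).2 ⟨P, hP, hx⟩
    · intro P hP Q hQ hne
      rw [Finset.disjoint_left]
      intro x hx hx'
      exact hne (h2 P hP Q hQ x hx hx')
    · ext x
      rw [h3]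
      simp

theorem mem_partitionsAvoiding_iff' {α : Type*} [DecidableEq α] (B C : Finset α)
    (Δ : Finset (Finset α)) :
    Δ ∈ partitionsAvoiding B C ↔ Δ ∈ partitionsOf C ∧ ∀ Q ∈ Δ, ¬ Q ⊆ B := by
  unfold partitionsAvoiding
  rw [Finset.mem_filter]

/-- Decomposition of partitions of `{1,…,r}` relative to a proper subset `B`:
every partition `Π` of `{1,…,r}` arises, in exactly one way, as the disjoint union of the
blocks of a partition `Ξ` of some `A ⊆ B` together with the blocks of a partition
`Δ ∈ P_B({1,…,r}∖A)`; conversely every such pair assembles to a partition of `{1,…,r}`. -/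
theorem partition_decomposition {r : ℕ} (hr : 1 ≤ r) (B : Finset (Fin r))
    (hB : B ⊂ Finset.univ) :
    (∀ π ∈ partitionsOf (Finset.univ : Finset (Fin r)),
      ∃! AΞΔ : Finset (Fin r) × Finset (Finset (Fin r)) × Finset (Finset (Fin r)),
        AΞΔ.1 ⊆ B ∧
        AΞΔ.2.1 ∈ partitionsOf AΞΔ.1 ∧
        AΞΔ.2.2 ∈ partitionsAvoiding B (Finset.univ \ AΞΔ.1) ∧
        Disjoint AΞΔ.2.1 AΞΔ.2.2 ∧
        π = AΞΔ.2.1 ∪ AΞΔ.2.2) ∧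
    (∀ (A : Finset (Fin r)) (Ξ Δ : Finset (Finset (Fin r))),
      A ⊆ B → Ξ ∈ partitionsOf A → Δ ∈ partitionsAvoiding B (Finset.univ \ A) →
      Ξ ∪ Δ ∈ partitionsOf (Finset.univ : Finset (Fin r))) := by
  have key : ∀ C Δ, Δ ∈ partitionsAvoiding B C ↔ Δ ∈ partitionsOf C ∧ ∀ Q ∈ Δ, ¬ Q ⊆ B := by
    intro C Δ
    exact mem_partitionsAvoiding_iff' B C Δ
  simp only [key, mem_partitionsOf_iff']
  constructor
  · rintro π ⟨h1, h2, h3⟩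
    refine ⟨((π.filter (· ⊆ B)).biUnion id, π.filter (· ⊆ B), π.filter (¬ · ⊆ B)), ?_, ?_⟩
    · dsimp only
      refine ⟨?_, ⟨?_, ?_, ?_⟩, ⟨⟨?_, ?_, ?_⟩, ?_⟩, ?_, ?_⟩
      · intro x hx
        simp only [Finset.mem_biUnion, Finset.mem_filter, id] at hx
        obtain ⟨P, ⟨_, hP⟩, hx⟩ := hx
        exact hP hx
      · intro P hP
        exact h1 P (Finset.mem_filter.mp hP).1
      · intro P hP Q hQ
        exact h2 P (Finset.mem_filter.mp hP).1 Q (Finset.mem_filter.mp hQ).1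
      · intro x
        simp
      · intro P hP
        exact h1 P (Finset.mem_filter.mp hP).1
      · intro P hP Q hQ
        exact h2 P (Finset.mem_filter.mp hP).1 Q (Finset.mem_filter.mp hQ).1
      · intro x
        simp only [Finset.mem_sdiff, Finset.mem_univ, true_and, Finset.mem_biUnion,
          Finset.mem_filter, id]
        constructor
        · intro h
          obtain ⟨P, hP, hx⟩ := (h3 x).1 (Finset.mem_univ x)
          exact ⟨P, ⟨hP, fun hPB => h ⟨P, ⟨hP, hPB⟩, hx⟩⟩, hx⟩
        · rintro ⟨P, ⟨hP, hPB⟩, hx⟩ ⟨Q, ⟨hQ, hQB⟩, hx'⟩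
          exact hPB (h2 P hP Q hQ x hx hx' ▸ hQB)
      · intro Q hQ
        exact (Finset.mem_filter.mp hQ).2
      · rw [Finset.disjoint_left]
        intro P hP hP'
        exact (Finset.mem_filter.mp hP').2 (Finset.mem_filter.mp hP).2
      · ext P
        simp only [Finset.mem_union, Finset.mem_filter]
        tauto
    · rintro ⟨A, X, D⟩ ⟨hA, ⟨-, -, hX⟩, ⟨-, hD⟩, -, rfl⟩
      dsimp only at *
      have hXB : ∀ P ∈ X, P ⊆ B := fun P hP x hx => hA ((hX x).2 ⟨P, hP, hx⟩)
      have e1 : (X ∪ D).filter (· ⊆ B) = X := by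
        ext P
        simp only [Finset.mem_union, Finset.mem_filter]
        have := hXB P
        have := hD P
        tauto
      have e2 : (X ∪ D).filter (¬ · ⊆ B) = D := by
        ext P
        simp only [Finset.mem_union, Finset.mem_filter]
        have := hXB P
        have := hD P
        tauto
      rw [e1, e2]
      have e3 : A = X.biUnion id := by
        ext x
        rw [hX]
        simp
      rw [e3]
  · rintro A X D hA ⟨a1, a2, a3⟩ ⟨⟨b1, b2, b3⟩, -⟩
    have hd : ∀ P ∈ X, ∀ Q ∈ D, ∀ x, x ∈ P → x ∈ Q → False := by
      intro P hP Q hQ x hx hx'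
      exact (Finset.mem_sdiff.mp ((b3 x).2 ⟨Q, hQ, hx'⟩)).2 ((a3 x).2 ⟨P, hP, hx⟩)
    refine ⟨?_, ?_, ?_⟩
    · intro P hP
      rcases Finset.mem_union.mp hP with h | h
      · exact a1 P h
      · exact b1 P h
    · intro P hP Q hQ x hx hx'
      rcases Finset.mem_union.mp hP with h | h <;> rcases Finset.mem_union.mp hQ with h' | h'
      · exact a2 P h Q h' x hx hx'
      · exact (hd P h Q h' x hx hx').elim
      · exact (hd Q h' P h x hx' hx).elim
      · exact b2 P h Q h' x hx hx'
    · intro x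
      refine ⟨fun _ => ?_, fun _ => Finset.mem_univ x⟩
      by_cases hx : x ∈ A
      · obtain ⟨P, hP, h⟩ := (a3 x).1 hx
        exact ⟨P, Finset.mem_union_left _ hP, h⟩
      · obtain ⟨P, hP, h⟩ := (b3 x).1 (by simp [hx])
        exact ⟨P, Finset.mem_union_right _ hP, h⟩
end

section
/- For every positive integer r, ρ̄( Σ_{Π ∈ P(r)} c̄(Π) · ∏_{P ∈ Π} E(|P|; T) ) = T^r in ℝ[T]; that is, the partition sum Σ_{Π ∈ P(r)} c̄(Π) ∏_{P ∈ Π} E(|P|;T) equals ρ̄^{-1}(T^r). -/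
open Finset

open scoped Classical

/-- `E(k;T) ∈ ℝ[T]`: the constant polynomial `ζ(k)` if `k ≥ 2`, the variable `T` if `k = 1`. -/
noncomputable def Epoly (k : ℕ) : Polynomial ℝ :=
  if k = 1 then Polynomial.X else Polynomial.C (zetaVal k)

/-- `ρ̄(T^s) = s! Σ (∏_{m=2}^s (−ζ(m)/m)^{i_m}/i_m!) T^j/j!`, the sum over tuples
`(j, i_2, …, i_s)` of nonnegative integers with `j + Σ_{m=2}^s m·i_m = s`.
Tuples are encoded as pairs `(j, i)` with `i : Fin (s+1) → ℕ` supported on indices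
`m ≥ 2` (the values `i 0`, `i 1` are forced to be `0`); the bound `i m ≤ s` is
automatic, so ranging over `{0,…,s}` captures all tuples. -/
noncomputable def rhoX (s : ℕ) : Polynomial ℝ :=
  (s.factorial : Polynomial ℝ) *
    ∑ j ∈ Finset.range (s + 1),
      ∑ i ∈ (Fintype.piFinset fun _ : Fin (s + 1) => Finset.range (s + 1)).filter
          (fun i => (∀ m : Fin (s + 1), m.1 < 2 → i m = 0) ∧
            j + ∑ m : Fin (s + 1), m.1 * i m = s),
        (∏ m : Fin (s + 1),
            Polynomial.C ((-(zetaVal m.1) / (m.1 : ℝ)) ^ i m / ((i m).factorial : ℝ))) *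
          (Polynomial.X ^ j * Polynomial.C ((j.factorial : ℝ)⁻¹))

/-- The `ℝ`-linear endomorphism `ρ̄` of `ℝ[T]`, defined on monomials by `T^s ↦ ρ̄(T^s)`
and extended by linearity. -/
noncomputable def rho (p : Polynomial ℝ) : Polynomial ℝ :=
  ∑ s ∈ p.support, Polynomial.C (p.coeff s) * rhoX s

noncomputable def Zs (k : ℕ) : ℝ := if k = 0 then 0 else zetaVal (k+1)

noncomputable def asol : ℕ → ℝ
  | 0 => 1
  | (n+1) => -(∑ k : Fin (n+1), Zs k.1 * asol (n - k.1)) / ((n:ℝ)+1)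

noncomputable def fsol (w : ℕ → Polynomial ℝ) : ℕ → Polynomial ℝ
  | 0 => 1
  | (n+1) => ∑ k : Fin (n+1), (n.choose k.1 : Polynomial ℝ) * (w (k.1+1) * fsol w (n - k.1))

theorem asol_succ (n : ℕ) :
    asol (n+1) * ((n:ℝ)+1) = -∑ k ∈ range (n+1), Zs k * asol (n-k) := by
  rw [asol, ← Fin.sum_univ_eq_sum_range (fun k => Zs k * asol (n-k))]
  have : (n:ℝ)+1 ≠ 0 := by positivity
  field_simp

theorem fsol_succ (w : ℕ → Polynomial ℝ) (n : ℕ) :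
    fsol w (n+1) = ∑ k ∈ range (n+1), (n.choose k : Polynomial ℝ) * (w (k+1) * fsol w (n-k)) := by
  rw [fsol, ← Fin.sum_univ_eq_sum_range
    (fun k => (n.choose k : Polynomial ℝ) * (w (k+1) * fsol w (n-k)))]

theorem mem_parts {α : Type*} [DecidableEq α] (S : Finset α) (π : Finset (Finset α)) :
    π ∈ partitionsOf S ↔ (∀ P ∈ π, P.Nonempty) ∧
    (∀ P ∈ π, ∀ Q ∈ π, P ≠ Q → Disjoint P Q) ∧ (∀ x, x ∈ S ↔ ∃ P ∈ π, x ∈ P) := by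
  unfold partitionsOf
  rw [mem_filter]
  constructor
  · rintro ⟨_, h1, h2, h3⟩
    refine ⟨h1, h2, fun x => ?_⟩
    rw [← h3]; simp
  · rintro ⟨h1, h2, h3⟩
    refine ⟨?_, h1, h2, ?_⟩
    · rw [mem_powerset]; intro P hP; rw [mem_powerset]; intro x hx
      exact (h3 x).2 ⟨P, hP, hx⟩
    · ext x; rw [h3]; simp

theorem parts_rec {α : Type*} [DecidableEq α] (w : ℕ → Polynomial ℝ) (a : α) (S : Finset α)
    (ha : a ∉ S) :
    ∑ π ∈ partitionsOf (insert a S), ∏ P ∈ π, w P.card =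
    ∑ U ∈ S.powerset, w (U.card + 1) * ∑ π ∈ partitionsOf (S \ U), ∏ P ∈ π, w P.card := by
  simp_rw [mul_sum]
  rw [sum_sigma']
  symm
  have key : ∀ x ∈ S.powerset.sigma (fun U => partitionsOf (S \ U)), insert a x.1 ∉ x.2 := by
    rintro ⟨U, π⟩ h hh
    simp only [mem_sigma, mem_powerset, mem_parts] at h
    have := (h.2.2.2 a).2 ⟨_, hh, mem_insert_self _ _⟩
    simp [ha] at this
  refine sum_bij (fun x _ => insert (insert a x.1) x.2) ?_ ?_ ?_ ?_
  · rintro ⟨U, π⟩ h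
    simp only [mem_sigma, mem_powerset, mem_parts] at h ⊢
    obtain ⟨hU, h1, h2, h3⟩ := h
    have hd : ∀ P ∈ π, Disjoint (insert a U) P := by
      intro P hP
      rw [disjoint_left]
      intro x hx hxP
      have := (h3 x).2 ⟨P, hP, hxP⟩
      rw [mem_sdiff] at this
      rw [mem_insert] at hx
      rcases hx with rfl | hx
      · exact ha this.1
      · exact this.2 hx
    refine ⟨?_, ?_, ?_⟩
    · intro P hP
      rw [mem_insert] at hP
      rcases hP with rfl | hP
      · exact insert_nonempty _ _
      · exact h1 P hP
    · intro P hP Q hQ hPQ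
      rw [mem_insert] at hP hQ
      rcases hP with rfl | hP <;> rcases hQ with rfl | hQ
      · exact absurd rfl hPQ
      · exact hd Q hQ
      · exact (hd P hP).symm
      · exact h2 P hP Q hQ hPQ
    · intro x
      have h3x := h3 x
      rw [mem_sdiff] at h3x
      simp only [mem_insert, exists_eq_or_imp]
      rw [← h3x]
      have := @hU x
      tauto
  · rintro ⟨U, π⟩ h ⟨V, σ⟩ h' heq
    have k1 := key _ h
    have k2 := key _ h'
    simp only at heq k1 k2
    simp only [mem_sigma, mem_powerset, mem_parts] at h h'
    have hab : insert a U = insert a V := by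
      have : insert a U ∈ insert (insert a V) σ := heq ▸ mem_insert_self _ _
      rw [mem_insert] at this
      rcases this with h4 | h4
      · exact h4
      · have := (h'.2.2.2 a).2 ⟨_, h4, mem_insert_self _ _⟩
        simp [ha] at this
    have hUV : U = V := by
      have e1 := erase_insert (fun hh => ha (h.1 hh) : a ∉ U)
      have e2 := erase_insert (fun hh => ha (h'.1 hh) : a ∉ V)
      rw [← e1, ← e2, hab]
    subst hUV
    have : π = σ := by
      rw [← erase_insert k1, ← erase_insert k2, heq]
    rw [this]
  · intro π hπ
    rw [mem_parts] at hπ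
    obtain ⟨h1, h2, h3⟩ := hπ
    obtain ⟨Q, hQ, haQ⟩ := (h3 a).1 (mem_insert_self _ _)
    refine ⟨⟨Q.erase a, π.erase Q⟩, ?_, ?_⟩
    · simp only [mem_sigma, mem_powerset, mem_parts]
      refine ⟨?_, ?_, ?_, ?_⟩
      · intro x hx
        rw [mem_erase] at hx
        have := (h3 x).2 ⟨Q, hQ, hx.2⟩
        rw [mem_insert] at this
        tauto
      · intro P hP
        exact h1 P (mem_of_mem_erase hP)
      · intro P hP R hR
        exact h2 P (mem_of_mem_erase hP) R (mem_of_mem_erase hR)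
      · intro x
        rw [mem_sdiff, mem_erase]
        constructor
        · rintro ⟨hx, hxQ⟩
          obtain ⟨P, hP, hxP⟩ := (h3 x).1 (mem_insert_of_mem hx)
          refine ⟨P, mem_erase.2 ⟨?_, hP⟩, hxP⟩
          rintro rfl
          exact hxQ ⟨fun h => ha (h ▸ hx), hxP⟩
        · rintro ⟨P, hP, hxP⟩
          rw [mem_erase] at hP
          have hd := disjoint_left.1 (h2 P hP.2 Q hQ hP.1)
          have hxi := (h3 x).2 ⟨P, hP.2, hxP⟩
          rw [mem_insert] at hxi
          refine ⟨?_, fun h => hd hxP h.2⟩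
          rcases hxi with rfl | hxi
          · exact absurd haQ (hd hxP)
          · exact hxi
    · simp only
      rw [insert_erase haQ, insert_erase hQ]
  · rintro ⟨U, π⟩ h
    have k1 := key _ h
    simp only at k1 ⊢
    rw [prod_insert k1, card_insert_of_notMem]
    simp only [mem_sigma, mem_powerset] at h
    exact fun hh => ha (h.1 hh)

theorem parts_eq {α : Type*} [DecidableEq α] (w : ℕ → Polynomial ℝ) :
    ∀ (n : ℕ) (S : Finset α), S.card = n →
    ∑ π ∈ partitionsOf S, ∏ P ∈ π, w P.card = fsol w n := by
  intro n
  induction n using Nat.strong_induction_on with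
  | _ n ih =>
    intro S hS
    rcases S.eq_empty_or_nonempty with rfl | ⟨a, haS⟩
    · have : partitionsOf (∅ : Finset α) = {∅} := by
        ext π
        rw [mem_parts, mem_singleton]
        constructor
        · rintro ⟨h1, _, h3⟩
          rw [eq_empty_iff_forall_notMem]
          intro P hP
          obtain ⟨x, hx⟩ := h1 P hP
          exact absurd ((h3 x).2 ⟨P, hP, hx⟩) (notMem_empty _)
        · rintro rfl; simp
      rw [this]
      simp at hS
      subst hS
      simp [fsol]
    · obtain ⟨S', haS', rfl⟩ : ∃ S', a ∉ S' ∧ S = insert a S' :=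
        ⟨S.erase a, notMem_erase _ _, (insert_erase haS).symm⟩
      rw [card_insert_of_notMem haS'] at hS
      subst hS
      rw [parts_rec w a S' haS', fsol_succ]
      have : ∀ U ∈ S'.powerset, w (U.card + 1) *
          ∑ π ∈ partitionsOf (S' \ U), ∏ P ∈ π, w P.card =
          (fun k => w (k+1) * fsol w (S'.card - k)) U.card := by
        intro U hU
        rw [mem_powerset] at hU
        rw [ih (S'.card - U.card) (by omega) (S' \ U) (card_sdiff_of_subset hU)]
      rw [sum_congr rfl this,
        sum_powerset_apply_card (fun k => w (k+1) * fsol w (S'.card - k))]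
      refine sum_congr rfl fun k _ => ?_
      rw [nsmul_eq_mul]

open Polynomial in
noncomputable def qc (m i : ℕ) : ℝ :=
  if m < 2 ∧ i ≠ 0 then 0 else (-(zetaVal m) / (m:ℝ))^i / (i.factorial : ℝ)

noncomputable def Em (s m : ℕ) : Polynomial ℝ :=
  ∑ i ∈ range (s+1), Polynomial.C (qc m i) * Polynomial.X ^ (m*i)

noncomputable def Ps (s : ℕ) : Polynomial ℝ := ∏ m : Fin (s+1), Em s m.1

theorem Em_small (s m : ℕ) (hm : m < 2) : Em s m = 1 := by
  unfold Em
  rw [sum_eq_single 0]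
  · simp [qc]
  · intro b _ hb; simp [qc, hm, hb]
  · simp

open Polynomial in
theorem Em_deriv (s m : ℕ) :
    X ^ s ∣ derivative (Em s m) + C (Zs (m-1)) * X^(m-1) * Em s m := by
  by_cases hm : m < 2
  · rw [Em_small s m hm]
    have : m - 1 = 0 := by omega
    simp [this, Zs]
  · have hz : Zs (m-1) = zetaVal m := by
      unfold Zs; rw [if_neg (by omega)]; congr 1; omega
    have hm0 : (m:ℝ) ≠ 0 := by norm_cast; omega
    have h1 : derivative (Em s m) = - C (zetaVal m) * X^(m-1) *
        ∑ i ∈ range s, C (qc m i) * X ^ (m*i) := by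
      unfold Em
      rw [derivative_sum, sum_range_succ', mul_sum]
      have e0 : derivative (C (qc m 0) * X ^ (m*0) : ℝ[X]) = 0 := by simp
      rw [e0, add_zero]
      simp only [derivative_C_mul_X_pow]
      refine sum_congr rfl fun i _ => ?_
      have e1 : m * (i+1) - 1 = (m-1) + m * i := by
        obtain ⟨k, rfl⟩ : ∃ k, m = k+1 := ⟨m-1, by omega⟩
        rw [mul_add, mul_one]; omega
      have e2 : qc m (i+1) * ((m*(i+1) : ℕ):ℝ) = - zetaVal m * qc m i := by
        unfold qc
        rw [if_neg (by tauto), if_neg (by tauto), Nat.factorial_succ]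
        have := Nat.cast_ne_zero (R := ℝ).2 i.factorial_ne_zero
        push_cast
        field_simp
        rw [pow_succ]
        field_simp
      rw [e1, e2, pow_add]
      simp only [C_mul, C_neg]
      ring
    rw [h1, hz]
    unfold Em
    rw [sum_range_succ]
    have : X^s ∣ (X : ℝ[X])^(m*s) := pow_dvd_pow _ (Nat.le_mul_of_pos_left _ (by omega))
    refine Dvd.dvd.trans this ⟨C (zetaVal m) * X^(m-1) * C (qc m s), ?_⟩
    ring

open Polynomial in
theorem Ps_deriv (s : ℕ) :
    X ^ s ∣ derivative (Ps s) + (∑ m : Fin (s+1), C (Zs (m.1-1)) * X^(m.1-1)) * Ps s := by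
  unfold Ps
  rw [derivative_prod_finset, sum_mul, ← sum_add_distrib]
  refine dvd_sum fun m _ => ?_
  rw [← mul_prod_erase univ (fun m : Fin (s+1) => Em s m.1) (mem_univ m)]
  obtain ⟨c, hc⟩ := Em_deriv s m.1
  refine ⟨c * ∏ x ∈ univ.erase m, Em s x.1, ?_⟩
  linear_combination (∏ x ∈ univ.erase m, Em s x.1) * hc

open Polynomial in
theorem Z_coeff (s k : ℕ) (hk : k < s) :
    (∑ m : Fin (s+1), (C (Zs (m.1-1)) * X^(m.1-1) : ℝ[X])).coeff k = Zs k := by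
  rw [Fin.sum_univ_succ]
  simp only [Fin.val_zero, Fin.val_succ, Nat.add_sub_cancel]
  rw [Fin.sum_univ_eq_sum_range (fun i => (C (Zs i) * X^i : ℝ[X])) s]
  simp [finsetSum_coeff, coeff_X_pow, Zs]
  intro h; omega

open Polynomial in
theorem Ps_coeff (s : ℕ) : ∀ n, n ≤ s → (Ps s).coeff n = asol n := by
  intro n
  induction n using Nat.strong_induction_on with
  | _ n ih =>
    intro hn
    rcases n with _ | n
    · have : (Ps s).coeff 0 = ∏ m : Fin (s+1), (Em s m.1).coeff 0 := by
        unfold Ps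
        simp only [coeff_zero_eq_eval_zero, eval_prod]
      rw [this, asol]
      refine prod_eq_one fun m _ => ?_
      by_cases hm : m.1 < 2
      · rw [Em_small _ _ hm]; simp
      · unfold Em
        rw [finsetSum_coeff, sum_eq_single 0]
        · simp [qc]
        · intro b _ hb
          rw [coeff_C_mul, coeff_X_pow, if_neg, mul_zero]
          intro h
          have := mul_ne_zero (show m.1 ≠ 0 by omega) hb
          omega
        · simp
    · have h := (X_pow_dvd_iff.1 (Ps_deriv s)) n (by omega)
      rw [coeff_add, coeff_derivative, coeff_mul,
        Finset.Nat.sum_antidiagonal_eq_sum_range_succ_mk] at h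
      have h2 : ∑ k ∈ range n.succ,
        (∑ m : Fin (s+1), (C (Zs (m.1-1)) * X^(m.1-1) : ℝ[X])).coeff k * (Ps s).coeff (n-k)
        = ∑ k ∈ range (n+1), Zs k * asol (n-k) := by
        refine sum_congr rfl fun k hk => ?_
        rw [mem_range] at hk
        rw [Z_coeff s k (by omega), ih (n-k) (by omega) (by omega)]
      rw [h2] at h
      have h3 := asol_succ n
      have : (n:ℝ)+1 ≠ 0 := by positivity
      apply mul_right_cancel₀ this
      linarith

open Polynomial in
theorem Ps_coeff_eq (s n : ℕ) : (Ps s).coeff n =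
    ∑ i ∈ (Fintype.piFinset fun _ : Fin (s + 1) => Finset.range (s + 1)).filter
          (fun i => (∀ m : Fin (s + 1), m.1 < 2 → i m = 0) ∧
            ∑ m : Fin (s + 1), m.1 * i m = n),
        (∏ m : Fin (s + 1),
            ((-(zetaVal m.1) / (m.1 : ℝ)) ^ i m / ((i m).factorial : ℝ))) := by
  unfold Ps Em
  rw [prod_univ_sum, finsetSum_coeff, sum_filter]
  refine sum_congr rfl fun p _ => ?_
  rw [prod_mul_distrib, prod_pow_eq_pow_sum, ← map_prod, coeff_C_mul, coeff_X_pow]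
  by_cases h1 : ∀ m : Fin (s + 1), m.1 < 2 → p m = 0
  · have : ∏ m : Fin (s+1), qc m.1 (p m) = ∏ m : Fin (s + 1),
            ((-(zetaVal m.1) / (m.1 : ℝ)) ^ p m / ((p m).factorial : ℝ)) := by
      refine prod_congr rfl fun m _ => ?_
      unfold qc
      rw [if_neg]
      rintro ⟨h, h'⟩
      exact h' (h1 m h)
    rw [this]
    by_cases h2 : ∑ m : Fin (s + 1), m.1 * p m = n
    · rw [if_pos h2.symm, if_pos ⟨h1, h2⟩, mul_one]
    · rw [if_neg (Ne.symm h2), if_neg (fun h => h2 h.2), mul_zero]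
  · have h2 := h1
    push Not at h2
    obtain ⟨m, hm, hpm⟩ := h2
    rw [if_neg (c := _ ∧ _) (fun h => h1 h.1), prod_eq_zero (mem_univ m) (by simp [qc, hm, hpm]), zero_mul]

open Polynomial in
theorem rhoX_eq (s : ℕ) : rhoX s = (s.factorial : ℝ[X]) *
    ∑ j ∈ range (s+1), C (asol (s-j)) * (X^j * C ((j.factorial : ℝ)⁻¹)) := by
  unfold rhoX
  congr 1
  refine sum_congr rfl fun j hj => ?_
  rw [mem_range] at hj
  rw [← sum_mul, ← Ps_coeff s (s-j) (by omega), Ps_coeff_eq, map_sum]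
  congr 1
  refine sum_congr ?_ fun i _ => ?_
  · refine filter_congr fun i _ => ?_
    refine and_congr_right fun _ => ?_
    omega
  · rw [map_prod]

theorem rho_add_smul_aux (p : Polynomial ℝ) :
    rho p = p.sum fun s c => Polynomial.C c * rhoX s := rfl

noncomputable def rhoL : Polynomial ℝ →ₗ[ℝ] Polynomial ℝ where
  toFun := rho
  map_add' p q := by
    simp only [rho_add_smul_aux]
    refine Polynomial.sum_add_index _ _ _ ?_ ?_
    · simp
    · intros; rw [Polynomial.C_add, add_mul]
  map_smul' c p := by
    simp only [rho_add_smul_aux]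
    rw [Polynomial.sum_smul_index _ _ _ (by simp)]
    simp [Polynomial.sum, Finset.smul_sum, Polynomial.smul_eq_C_mul, mul_assoc]

theorem rhoL_X (s : ℕ) : rhoL (Polynomial.X ^ s) = rhoX s := by
  change rho _ = _
  rw [rho_add_smul_aux, ← Polynomial.monomial_one_right_eq_X_pow, Polynomial.sum_monomial_index _ _ (by simp)]
  simp

noncomputable def wE (k : ℕ) : Polynomial ℝ := ((k-1).factorial : Polynomial ℝ) * Epoly k

open Polynomial in
noncomputable def un (n : ℕ) : ℝ[X] := C ((n.factorial : ℝ)⁻¹) * fsol wE n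

open Polynomial in
theorem un_succ (n : ℕ) :
    un (n+1) * ((n:ℝ[X])+1) = ∑ k ∈ range (n+1), Epoly (k+1) * un (n-k) := by
  unfold un
  rw [fsol_succ, mul_sum, sum_mul]
  refine sum_congr rfl fun k hk => ?_
  rw [mem_range] at hk
  unfold wE
  have h : (((n+1).factorial : ℝ)⁻¹) * (n.choose k) * (k.factorial) * ((n:ℝ)+1)
      = ((n-k).factorial : ℝ)⁻¹ := by
    have h1 := Nat.choose_mul_factorial_mul_factorial (show k ≤ n by omega)
    have h2 : (n.choose k : ℝ) * k.factorial * (n-k).factorial = n.factorial := by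
      exact_mod_cast h1
    rw [Nat.factorial_succ]
    have h3 := Nat.cast_ne_zero (R := ℝ).2 n.factorial_ne_zero
    have h4 := Nat.cast_ne_zero (R := ℝ).2 (n-k).factorial_ne_zero
    have : (n:ℝ)+1 ≠ 0 := by positivity
    push_cast
    field_simp
    linarith
  rw [← h]
  simp only [C_mul, C_add, Nat.add_sub_cancel, C_1, map_natCast]
  ring

open Polynomial in
theorem Epoly_succ (k : ℕ) : Epoly (k+1) = (if k = 0 then X else 0) + C (Zs k) := by
  unfold Epoly Zs
  by_cases h : k = 0 <;> simp [h]

theorem ps_leib {R : Type*} [CommRing R] (A U : PowerSeries R) :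
    PowerSeries.derivative R (A * U) =
      A * PowerSeries.derivative R U + U * PowerSeries.derivative R A := by
  rw [Derivation.leibniz, smul_eq_mul, smul_eq_mul]

open Polynomial in
theorem conv_eq (n : ℕ) :
    ∑ k ∈ range (n+1), C (asol k) * un (n-k) = C ((n.factorial : ℝ)⁻¹) * X^n := by
  let A : PowerSeries ℝ[X] := PowerSeries.mk fun n => C (asol n)
  let U : PowerSeries ℝ[X] := PowerSeries.mk un
  let Z : PowerSeries ℝ[X] := PowerSeries.mk fun n => C (Zs n)
  have hA : PowerSeries.derivative ℝ[X] A = - (Z * A) := by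
    ext1 n
    rw [PowerSeries.coeff_derivative, map_neg, PowerSeries.coeff_mul,
      Finset.Nat.sum_antidiagonal_eq_sum_range_succ_mk]
    simp only [A, Z, PowerSeries.coeff_mk]
    have := congrArg C (asol_succ n)
    simpa using this
  have hU : PowerSeries.derivative ℝ[X] U = (PowerSeries.C (X : ℝ[X]) + Z) * U := by
    have : PowerSeries.C (X : ℝ[X]) + Z = PowerSeries.mk fun n => Epoly (n+1) := by
      ext1 n
      simp [Z, Epoly_succ, PowerSeries.coeff_C]
    rw [this]
    ext1 n
    rw [PowerSeries.coeff_derivative, PowerSeries.coeff_mul,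
      Finset.Nat.sum_antidiagonal_eq_sum_range_succ_mk]
    simp only [U, PowerSeries.coeff_mk]
    exact un_succ n
  have hH : PowerSeries.derivative ℝ[X] (A * U) = PowerSeries.C (X : ℝ[X]) * (A * U) := by
    rw [ps_leib, hA, hU]
    ring
  have hc : ∀ n, PowerSeries.coeff n (A * U) = C ((n.factorial : ℝ)⁻¹) * X^n := by
    intro n
    induction n with
    | zero => simp [A, U, asol, un, fsol]
    | succ n ih =>
      have h := congrArg (PowerSeries.coeff n) hH
      rw [PowerSeries.coeff_derivative, PowerSeries.coeff_C_mul, ih] at h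
      have hne : ((n:ℝ[X])+1) ≠ 0 := by exact_mod_cast (Nat.succ_ne_zero n)
      apply mul_right_cancel₀ hne
      rw [h, Nat.factorial_succ]
      have : C ((n:ℝ)+1) = (n:ℝ[X])+1 := by simp
      rw [← this, pow_succ]
      have h2 : (n.factorial : ℝ)⁻¹ = (((n+1)*n.factorial : ℕ) : ℝ)⁻¹ * ((n:ℝ)+1) := by
        have h3 := Nat.cast_ne_zero (R := ℝ).2 n.factorial_ne_zero
        have : (n:ℝ)+1 ≠ 0 := by positivity
        push_cast
        field_simp
      rw [h2, C_mul]
      ring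
  rw [← hc n, PowerSeries.coeff_mul, Finset.Nat.sum_antidiagonal_eq_sum_range_succ_mk]
  simp [A, U]

open Polynomial in
theorem rhoL_un (n : ℕ) : rhoL (un n) = C ((n.factorial : ℝ)⁻¹) * X^n := by
  induction n using Nat.strong_induction_on with
  | _ n ih =>
    have h := congrArg rhoL (conv_eq n)
    have h0 : C ((n.factorial : ℝ)⁻¹) * (n.factorial : ℝ[X]) = 1 := by
      have h3 := Nat.cast_ne_zero (R := ℝ).2 n.factorial_ne_zero
      rw [← map_natCast C, ← C_mul, inv_mul_cancel₀ h3, C_1]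
    simp only [← smul_eq_C_mul, map_sum, map_smul] at h
    rw [rhoL_X, rhoX_eq, smul_eq_C_mul, ← mul_assoc, h0, one_mul,
      ← sum_range_reflect (fun j => C (asol (n-j)) * (X^j * C ((j.factorial : ℝ)⁻¹))) (n+1),
      sum_range_succ', sum_range_succ'] at h
    have e : ∑ k ∈ range n, asol (k+1) • rhoL (un (n-(k+1))) =
       ∑ k ∈ range n, C (asol (n-(n+1-1-(k+1)))) * (X^(n+1-1-(k+1)) *
        C (((n+1-1-(k+1)).factorial : ℝ)⁻¹)) := by
      refine sum_congr rfl fun k hk => ?_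
      rw [mem_range] at hk
      rw [ih _ (by omega), smul_eq_C_mul]
      have e1 : n+1-1-(k+1) = n-(k+1) := by omega
      have e2 : n - (n-(k+1)) = k+1 := by omega
      rw [e1, e2]
      ring
    rw [e] at h
    have h' := add_left_cancel h
    simp [asol] at h'
    rw [h']
    try ring

/-- main -/
theorem rho_partition_sum (r : ℕ) (hr : 1 ≤ r) :
    rho (∑ π ∈ partitionsOf (Finset.univ : Finset (Fin r)),
        (cbar π : Polynomial ℝ) * ∏ P ∈ π, Epoly P.card) =
      Polynomial.X ^ r := by
  have h1 : ∑ π ∈ partitionsOf (Finset.univ : Finset (Fin r)),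
        (cbar π : Polynomial ℝ) * ∏ P ∈ π, Epoly P.card = fsol wE r := by
    rw [← parts_eq wE r (Finset.univ : Finset (Fin r)) (by simp)]
    refine sum_congr rfl fun π _ => ?_
    unfold cbar wE
    rw [prod_mul_distrib]
    push_cast
    rfl
  have h3 := Nat.cast_ne_zero (R := ℝ).2 r.factorial_ne_zero
  have h2 := rhoL_un r
  unfold un at h2
  rw [← Polynomial.smul_eq_C_mul, ← Polynomial.smul_eq_C_mul, map_smul] at h2
  have h4 := smul_right_injective (Polynomial ℝ) (inv_ne_zero h3) h2
  rw [h1]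
  exact h4
end
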